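/- Let p_1, …, p_k be real polynomials in l variables, each of total degree at most d, with d ≥ 1 and k ≥ l ≥ 1. Then the number of distinct sign vectors (sgn(p_1(x)), …, sgn(p_k(x))) ∈ {−1, 0, 1}^k realized as x ranges over ℝ^l is at most (8·e·d·k/l)^l, where e denotes Euler's number exp(1). -/

import Mathlib

/-!
Let `P` be a finite family of polynomials. On a nonempty region cut out by strict sign conditions on
the `P i`, a product `∏ |P i| ^ w i` of positive powers times a Gaussian is positive, vanishes on
the boundary and decays at infinity, so it attains its maximum. Taking logarithms, a maximum point
`x` together with the multipliers `λ i = w i / P i(x)` solves a square system of equations of degree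
at most `d` in `x` and at most `1` in `λ`, whose right-hand side consists of the weights and minus
the centre of the Gaussian. By Sard's theorem these can be chosen so that all solutions are
nondegenerate. A bihomogeneous Bézout bound, obtained by comparing dimensions of spaces of
polynomials as the degree tends to infinity, then bounds the number of solutions, hence of strict
sign vectors. Zero signs are removed by passing to the polynomials `p i ± ε` with `ε` small.
-/

open MvPolynomial Module Filter Topology

noncomputable section

/-! ### Polynomials of bounded bidegree -/

section Bidegree

/-- Polynomials in two blocks of variables `σ` and `ι`, of degree at most `a` in the first block and
at most `b` in the second. -/
def restrictBidegree (σ ι R : Type*) [CommSemiring R] (a b : ℕ) :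
    Submodule R (MvPolynomial (σ ⊕ ι) R) :=
  restrictSupport R {s | (Finsupp.sumFinsuppAddEquivProdFinsupp s).1.degree ≤ a ∧
    (Finsupp.sumFinsuppAddEquivProdFinsupp s).2.degree ≤ b}

variable {σ ι τ R : Type*} [CommSemiring R] {a b a' b' : ℕ}

lemma restrictBidegree_mono (ha : a ≤ a') (hb : b ≤ b') :
    restrictBidegree σ ι R a b ≤ restrictBidegree σ ι R a' b' :=
  restrictSupport_mono R fun _ hs => ⟨hs.1.trans ha, hs.2.trans hb⟩

lemma mul_mem_restrictBidegree {p q : MvPolynomial (σ ⊕ ι) R} (hp : p ∈ restrictBidegree σ ι R a b)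
    (hq : q ∈ restrictBidegree σ ι R a' b') : p * q ∈ restrictBidegree σ ι R (a + a') (b + b') := by
  refine restrictSupport_mono R (Set.add_subset_iff.2 fun s hs t ht => ?_)
    (restrictSupport_add (R := R) _ _ ▸ Submodule.mul_mem_mul hp hq)
  simp only [Set.mem_ofPred_eq, map_add, Prod.fst_add, Prod.snd_add] at hs ht ⊢
  exact ⟨add_le_add hs.1 ht.1, add_le_add hs.2 ht.2⟩

lemma C_mem_restrictBidegree (r : R) : C r ∈ restrictBidegree σ ι R a b := by
  rw [C_apply, restrictBidegree, monomial_mem_restrictSupport]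
  exact .inl (by simp)

lemma X_inl_mem_restrictBidegree (i : σ) : X (.inl i) ∈ restrictBidegree σ ι R 1 0 := by
  rw [X, restrictBidegree, monomial_mem_restrictSupport]
  exact .inl (by simp)

lemma X_inr_mem_restrictBidegree (i : ι) : X (.inr i) ∈ restrictBidegree σ ι R 0 1 := by
  rw [X, restrictBidegree, monomial_mem_restrictSupport]
  exact .inl (by simp)

lemma pow_mem_restrictBidegree {p : MvPolynomial (σ ⊕ ι) R} (hp : p ∈ restrictBidegree σ ι R a b)
    (n : ℕ) : p ^ n ∈ restrictBidegree σ ι R (n * a) (n * b) := by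
  induction n with
  | zero => simpa using C_mem_restrictBidegree (1 : R)
  | succ n ih => simpa only [pow_succ, add_one_mul] using mul_mem_restrictBidegree ih hp

lemma prod_pow_mem_restrictBidegree {H : τ → MvPolynomial (σ ⊕ ι) R}
    (hH : ∀ j, H j ∈ restrictBidegree σ ι R a b) (s : Finset τ) (n : τ → ℕ) :
    ∏ j ∈ s, H j ^ n j ∈ restrictBidegree σ ι R ((∑ j ∈ s, n j) * a) ((∑ j ∈ s, n j) * b) := by
  classical
  induction s using Finset.induction_on with
  | empty => simpa using C_mem_restrictBidegree (1 : R)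
  | insert j s hj ih =>
    simpa only [Finset.prod_insert hj, Finset.sum_insert hj, add_mul] using
      mul_mem_restrictBidegree (pow_mem_restrictBidegree (hH j) (n j)) ih

lemma aeval_mem_restrictBidegree {H : τ → MvPolynomial (σ ⊕ ι) R}
    (hH : ∀ j, H j ∈ restrictBidegree σ ι R a b) {c : MvPolynomial τ R} {m : ℕ}
    (hc : c.totalDegree ≤ m) : aeval H c ∈ restrictBidegree σ ι R (m * a) (m * b) := by
  rw [aeval_def, eval₂_eq]
  refine Submodule.sum_mem _ fun s hs => ?_
  have hsm : s.degree ≤ m := (le_totalDegree hs).trans hc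
  rw [MvPolynomial.algebraMap_eq, ← smul_eq_C_mul]
  exact Submodule.smul_mem _ _ (restrictBidegree_mono (Nat.mul_le_mul_right _ hsm)
    (Nat.mul_le_mul_right _ hsm) (prod_pow_mem_restrictBidegree hH s.support s))

lemma rename_inl_mem_restrictBidegree {p : MvPolynomial σ R} {d : ℕ} (hp : p.totalDegree ≤ d) :
    rename .inl p ∈ restrictBidegree σ ι R d 0 := by
  simpa only [rename_eq_aeval, mul_one, mul_zero] using
    aeval_mem_restrictBidegree (H := X ∘ .inl) X_inl_mem_restrictBidegree hp

lemma mem_restrictBidegree_totalDegree (p : MvPolynomial (σ ⊕ ι) R) :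
    p ∈ restrictBidegree σ ι R p.totalDegree p.totalDegree := by
  have hX : ∀ j : σ ⊕ ι, X j ∈ restrictBidegree σ ι R 1 1
    | .inl i => restrictBidegree_mono le_rfl zero_le_one (X_inl_mem_restrictBidegree i)
    | .inr i => restrictBidegree_mono zero_le_one le_rfl (X_inr_mem_restrictBidegree i)
  simpa only [aeval_X_left_apply, mul_one] using
    aeval_mem_restrictBidegree hX (le_refl p.totalDegree)

section Finrank

lemma degree_option (t : Option σ →₀ ℕ) : t.degree = t none + t.some.degree := by
  rw [Finsupp.degree_apply, Finsupp.degree_apply]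
  exact Finsupp.sum_option_index t (fun _ n => n) (fun _ => rfl) fun _ _ _ => rfl

/-- A slack variable turns the exponents of degree at most `m` into those of degree exactly `m`. -/
def degreeLEEquivOptionDegreeEq (σ : Type*) (m : ℕ) :
    {s : σ →₀ ℕ // s.degree ≤ m} ≃ {t : Option σ →₀ ℕ // t.degree = m} where
  toFun s := ⟨s.1.optionElim (m - s.1.degree), by
    simpa [degree_option] using Nat.sub_add_cancel s.2⟩
  invFun t := ⟨t.1.some, by simp [← t.2, degree_option]⟩
  left_inv s := by simp
  right_inv t := by
    have ht : m - t.1.some.degree = t.1 none := by simp [← t.2, degree_option]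
    simp only [ht, Finsupp.optionElim_some]

lemma card_degree_le (σ : Type*) [Fintype σ] (m : ℕ) :
    Nat.card {s : σ →₀ ℕ // s.degree ≤ m} = (m + Fintype.card σ).choose (Fintype.card σ) := by
  classical
  rw [Nat.card_congr (degreeLEEquivOptionDegreeEq σ m),
    Nat.subtype_card (Finset.univ.finsuppAntidiag m)
      (by simp [Finset.mem_finsuppAntidiag, Finsupp.degree_eq_sum]),
    Finset.card_finsuppAntidiag_nat_eq_choose, Finset.card_univ, Fintype.card_option,
    ← Nat.choose_symm_add]
  congr 1
  omega

variable (σ ι R : Type*) [CommRing R] [StrongRankCondition R]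

lemma finrank_restrictTotalDegree [Fintype σ] (m : ℕ) :
    finrank R (restrictTotalDegree σ R m) = (m + Fintype.card σ).choose (Fintype.card σ) := by
  rw [← card_degree_le]
  exact finrank_eq_nat_card_basis (basisRestrictSupport R _)

lemma finrank_restrictBidegree [Fintype σ] [Fintype ι] (a b : ℕ) :
    finrank R (restrictBidegree σ ι R a b) =
      (a + Fintype.card σ).choose (Fintype.card σ) *
        (b + Fintype.card ι).choose (Fintype.card ι) := by
  rw [restrictBidegree, finrank_eq_nat_card_basis (basisRestrictSupport R _), ← card_degree_le,
    ← card_degree_le, ← Nat.card_prod]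
  exact Nat.card_congr ((Finsupp.sumFinsuppAddEquivProdFinsupp.toEquiv.subtypeEquiv
    fun _ => Iff.rfl).trans (Equiv.subtypeProdEquivProd (p := fun s : σ →₀ ℕ => s.degree ≤ a)
      (q := fun s : ι →₀ ℕ => s.degree ≤ b)))

instance finite_restrictTotalDegree [Finite σ] (m : ℕ) :
    Module.Finite R (restrictTotalDegree σ R m) :=
  have : Finite {s : σ →₀ ℕ | (s.sum fun _ e => e) ≤ m} :=
    (Finsupp.finite_of_degree_le m).to_subtype
  .of_basis (basisRestrictSupport R _)

instance finite_restrictBidegree [Finite σ] [Finite ι] (a b : ℕ) :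
    Module.Finite R (restrictBidegree σ ι R a b) :=
  have : Finite {s : σ ⊕ ι →₀ ℕ | (Finsupp.sumFinsuppAddEquivProdFinsupp s).1.degree ≤ a ∧
      (Finsupp.sumFinsuppAddEquivProdFinsupp s).2.degree ≤ b} :=
    (((Finsupp.finite_of_degree_le a).prod (Finsupp.finite_of_degree_le b)).preimage
      Finsupp.sumFinsuppAddEquivProdFinsupp.injective.injOn).to_subtype
  .of_basis (basisRestrictSupport R _)

end Finrank

end Bidegree

/-! ### Lines through a zero of a polynomial system -/

section Pderiv

variable {σ R : Type*} [CommSemiring R]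

lemma totalDegree_pderiv_le (p : MvPolynomial σ R) (i : σ) :
    (pderiv i p).totalDegree ≤ p.totalDegree - 1 := by
  classical
  conv_lhs => rw [p.as_sum, map_sum]
  refine totalDegree_finsetSum_le fun s hs => ?_
  rw [pderiv_monomial]
  by_cases hi : s i = 0
  · simp [hi]
  · refine (totalDegree_monomial_le _ _).trans ?_
    have hsub : (s - Finsupp.single i 1).degree + 1 = s.degree := by
      simpa using congrArg Finsupp.degree (Finsupp.sub_add_single_one_cancel hi)
    have hs : s.degree ≤ p.totalDegree := le_totalDegree hs
    change (s - Finsupp.single i 1).degree ≤ _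
    omega

end Pderiv

section Line

variable {τ R : Type*} [CommRing R]

lemma polynomial_eval_aeval {κ : Type*} (t : R) (q : κ → Polynomial R) (p : MvPolynomial κ R) :
    (aeval q p).eval t = eval (fun j => (q j).eval t) p := by
  simpa only [Polynomial.coe_aeval_eq_eval, aeval_eq_eval] using
    comp_aeval_apply (f := q) (Polynomial.aeval t) p

/-- The restriction of a polynomial to the line `t ↦ z + t • ξ`. -/
def lineRestriction (z ξ : τ → R) : MvPolynomial τ R →ₐ[R] Polynomial R :=
  aeval fun i => Polynomial.C (z i) + Polynomial.X * Polynomial.C (ξ i)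

variable (z ξ : τ → R) (p : MvPolynomial τ R)

lemma eval_zero_lineRestriction : (lineRestriction z ξ p).eval 0 = eval z p := by
  simp [lineRestriction, polynomial_eval_aeval]

lemma eval_zero_derivative_lineRestriction [Fintype τ] :
    (lineRestriction z ξ p).derivative.eval 0 = ∑ i, eval z (pderiv i p) * ξ i := by
  classical
  induction p using MvPolynomial.induction_on with
  | C r => simp [lineRestriction]
  | add p q hp hq => simp [hp, hq, add_mul, Finset.sum_add_distrib]
  | mul_X p i hp =>
    have hX : (lineRestriction z ξ (X i)).derivative.eval 0 = ξ i := by simp [lineRestriction]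
    rw [map_mul, Polynomial.derivative_mul, Polynomial.eval_add, Polynomial.eval_mul,
      Polynomial.eval_mul, hp, hX, eval_zero_lineRestriction, eval_zero_lineRestriction, eval_X]
    simp only [Derivation.leibniz, pderiv_X, smul_eq_mul, map_add, map_mul, eval_X, add_mul,
      Finset.sum_add_distrib, Finset.sum_mul]
    have hsum : ∑ j, eval z p * eval z ((Pi.single j 1 : τ → MvPolynomial τ R) i) * ξ j =
        eval z p * ξ i := by
      simp [Pi.single_apply, apply_ite (eval z)]
    rw [hsum, add_comm]
    simp only [mul_comm, mul_left_comm]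

/-- The Jacobian matrix of a polynomial map at `z`. -/
def jacobianMatrix {κ : Type*} (F : κ → MvPolynomial τ R) (z : τ → R) : Matrix κ τ R :=
  .of fun j i => eval z (pderiv i (F j))

lemma exists_lineRestriction_eq_X_mul [Fintype τ] {κ : Type*} {F : κ → MvPolynomial τ R}
    {z : τ → R} (hz : ∀ j, eval z (F j) = 0) (ξ : τ → R) :
    ∃ q : κ → Polynomial R, (∀ j, lineRestriction z ξ (F j) = Polynomial.X * q j) ∧
      ∀ j, (q j).eval 0 = (jacobianMatrix F z).mulVec ξ j := by
  refine ⟨fun j => (lineRestriction z ξ (F j)).divX, fun j => ?_, fun j => ?_⟩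
  · conv_lhs => rw [← Polynomial.X_mul_divX_add (lineRestriction z ξ (F j))]
    rw [Polynomial.coeff_zero_eq_eval_zero, eval_zero_lineRestriction, hz, Polynomial.C_0, add_zero]
  · rw [← Polynomial.coeff_zero_eq_eval_zero, Polynomial.coeff_divX, zero_add]
    have := eval_zero_derivative_lineRestriction z ξ (F j)
    rw [← Polynomial.coeff_zero_eq_eval_zero, Polynomial.coeff_derivative] at this
    simpa [jacobianMatrix, Matrix.mulVec, dotProduct] using this

variable {κ : Type*}

lemma aeval_mul_of_isHomogeneous {R S : Type*} [CommSemiring R] [CommSemiring S] [Algebra R S]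
    {p : MvPolynomial κ R} {n : ℕ} (hp : p.IsHomogeneous n) (t : S) (q : κ → S) :
    aeval (fun j => t * q j) p = t ^ n * aeval q p := by
  simp only [aeval_def, eval₂_eq, Finset.mul_sum, mul_pow, Finset.prod_mul_distrib,
    Finset.prod_pow_eq_pow_sum]
  refine Finset.sum_congr rfl fun s hs => ?_
  rw [← hp.degree_eq_sum_deg_support hs, mul_left_comm]

lemma sum_homogeneousComponent_add {R : Type*} [CommSemiring R] {p : MvPolynomial κ R} {n : ℕ}
    (hp : ∀ k < n, homogeneousComponent k p = 0) :
    ∑ k ∈ Finset.range (p.totalDegree + 1), homogeneousComponent (n + k) p = p := by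
  have hlow : ∑ k ∈ Finset.range n, homogeneousComponent k p = 0 :=
    Finset.sum_eq_zero fun k hk => hp k (Finset.mem_range.1 hk)
  have hadd := Finset.sum_range_add (fun k => homogeneousComponent k p) n (p.totalDegree + 1)
  rw [hlow, zero_add] at hadd
  rw [← hadd]
  conv_rhs => rw [← sum_homogeneousComponent p]
  refine (Finset.sum_subset (Finset.range_mono (Nat.le_add_left _ _)) fun k _ hk => ?_).symm
  exact homogeneousComponent_eq_zero _ _ (by simpa using hk)

lemma exists_aeval_X_mul_eq {p : MvPolynomial κ R} {n : ℕ}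
    (hp : ∀ k < n, homogeneousComponent k p = 0) (q : κ → Polynomial R) :
    ∃ r : Polynomial R, aeval (fun j => Polynomial.X * q j) p = Polynomial.X ^ n * r ∧
      r.eval 0 = eval (fun j => (q j).eval 0) (homogeneousComponent n p) := by
  refine ⟨∑ k ∈ Finset.range (p.totalDegree + 1),
    Polynomial.X ^ k * aeval q (homogeneousComponent (n + k) p), ?_, ?_⟩
  · conv_lhs => rw [← sum_homogeneousComponent_add hp, map_sum]
    rw [Finset.mul_sum]
    refine Finset.sum_congr rfl fun k _ => ?_
    rw [aeval_mul_of_isHomogeneous (homogeneousComponent_isHomogeneous _ _), pow_add, mul_assoc]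
  · rw [Finset.sum_range_succ']
    simp [Polynomial.eval_finsetSum, polynomial_eval_aeval]

lemma sum_eval_mul_eval_homogeneousComponent_eq_zero [Fintype τ] {β : Type*}
    {H : κ → MvPolynomial τ R} {z : τ → R} (hz : ∀ j, eval z (H j) = 0) {s : Finset β}
    {g : β → MvPolynomial τ R} {c : β → MvPolynomial κ R}
    (h : ∑ i ∈ s, g i * aeval H (c i) = 0) {n : ℕ}
    (hc : ∀ i ∈ s, ∀ k < n, homogeneousComponent k (c i) = 0) (ξ : τ → R) :
    ∑ i ∈ s, eval z (g i) *
      eval ((jacobianMatrix H z).mulVec ξ) (homogeneousComponent n (c i)) = 0 := by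
  obtain ⟨q, hqH, hq0⟩ := exists_lineRestriction_eq_X_mul hz ξ
  choose! r hr hr0 using fun i hi => exists_aeval_X_mul_eq (hc i hi) q
  have hline : ∀ i ∈ s, lineRestriction z ξ (aeval H (c i)) = Polynomial.X ^ n * r i := by
    intro i hi
    rw [comp_aeval_apply, ← hr i hi]
    simp only [hqH]
  have hsum : Polynomial.X ^ n * ∑ i ∈ s, lineRestriction z ξ (g i) * r i = 0 := by
    rw [← map_zero (lineRestriction z ξ), ← h, map_sum, Finset.mul_sum]
    refine Finset.sum_congr rfl fun i hi => ?_
    rw [map_mul, hline i hi, mul_left_comm]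
  have := congrArg (Polynomial.eval 0) ((Polynomial.monic_X_pow n).mul_right_eq_zero_iff.1 hsum)
  rw [Polynomial.eval_finsetSum, Polynomial.eval_zero] at this
  rw [← this]
  refine Finset.sum_congr rfl fun i hi => ?_
  rw [Polynomial.eval_mul, eval_zero_lineRestriction, hr0 i hi]
  simp only [hq0]

end Line

section Bezout

variable {τ K : Type*} [Fintype τ] [DecidableEq τ] [Field K]

/-- A zero of a square polynomial system at which the Jacobian determinant does not vanish. -/
structure IsNondegenerateZero (H : τ → MvPolynomial τ K) (z : τ → K) : Prop where
  eval_eq_zero : ∀ j, eval z (H j) = 0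
  det_ne_zero : (jacobianMatrix H z).det ≠ 0

lemma exists_forall_eval_eq_zero_iff_ne {β τ R : Type*} [Finite β] [CommRing R] [IsDomain R]
    {z : β → τ → R} (hz : Function.Injective z) :
    ∃ g : β → MvPolynomial τ R, ∀ i j, eval (z i) (g j) = 0 ↔ i ≠ j := by
  classical
  have := Fintype.ofFinite β
  have hsep : ∀ i j, i ≠ j → ∃ f : MvPolynomial τ R, eval (z i) f = 0 ∧ eval (z j) f ≠ 0 := by
    intro i j hij
    obtain ⟨t, ht⟩ := Function.ne_iff.1 (hz.ne hij)
    exact ⟨X t - C (z i t), by simp, by simpa [sub_eq_zero] using ht.symm⟩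
  choose! f hfi hfj using hsep
  refine ⟨fun j => ∏ i ∈ Finset.univ.erase j, f i j, fun i j => ?_⟩
  rw [map_prod, Finset.prod_eq_zero_iff]
  constructor
  · rintro ⟨x, hx, hx0⟩ rfl
    exact hfj x i (Finset.ne_of_mem_erase hx) hx0
  · exact fun hij => ⟨i, Finset.mem_erase.2 ⟨hij, Finset.mem_univ i⟩, hfi i j hij⟩

-- On a line through `z i` only `g i` survives, and the lowest-order term of the relation is the
-- lowest component of `c i` composed with the surjective Jacobian; so the homogeneous components of
-- `c` vanish one degree after the other.
lemma eq_zero_of_sum_mul_aeval_eq_zero [Infinite K] {β : Type*} [Fintype β]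
    {H : τ → MvPolynomial τ K} {z : β → τ → K} (hz : ∀ i, IsNondegenerateZero H (z i))
    {g : β → MvPolynomial τ K} (hg : ∀ i j, eval (z i) (g j) = 0 ↔ i ≠ j)
    {c : β → MvPolynomial τ K} (h : ∑ i, g i * aeval H (c i) = 0) : c = 0 := by
  have hcomp : ∀ n i, homogeneousComponent n (c i) = 0 := by
    intro n
    induction n using Nat.strong_induction_on with
    | _ n ih =>
    intro i
    refine MvPolynomial.funext fun y => ?_
    obtain ⟨ξ, rfl⟩ := Matrix.mulVec_surjective_iff_isUnit.2
      ((Matrix.isUnit_iff_isUnit_det _).2 (hz i).det_ne_zero.isUnit) y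
    have hsum := sum_eval_mul_eval_homogeneousComponent_eq_zero (hz i).eval_eq_zero h
      (fun j _ k hk => ih k hk j) ξ
    rw [Fintype.sum_eq_single i fun j hj => by rw [(hg i j).2 hj.symm, zero_mul]] at hsum
    rw [map_zero]
    exact (mul_eq_zero.1 hsum).resolve_left fun h0 => (hg i i).1 h0 rfl
  ext1 i
  rw [← sum_homogeneousComponent (c i)]
  exact Finset.sum_eq_zero fun n _ => hcomp n i

end Bezout

/-! ### A bihomogeneous Bézout bound -/

section Growth

lemma tendsto_choose_div_pow (c a l : ℕ) :
    Tendsto (fun m : ℕ => ((c + m * a + l).choose l : ℝ) / (m : ℝ) ^ l) atTop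
      (𝓝 ((a : ℝ) ^ l / l.factorial)) := by
  have hupper : Tendsto (fun m : ℕ => (((c + l : ℕ) : ℝ) / m + a) ^ l / l.factorial) atTop
      (𝓝 ((a : ℝ) ^ l / l.factorial)) := by
    simpa using (((tendsto_const_div_atTop_nhds_zero_nat _).add_const (a : ℝ)).pow l).div_const _
  refine tendsto_of_tendsto_of_tendsto_of_le_of_le' tendsto_const_nhds hupper ?_ ?_ <;>
    filter_upwards [eventually_gt_atTop 0] with m hm
  · rw [le_div_iff₀ (by positivity), div_mul_eq_mul_div, ← mul_pow]
    refine le_trans ?_ (Nat.pow_le_choose l (c + m * a + l))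
    rw [← Nat.cast_mul, mul_comm a m]
    gcongr
    omega
  · rw [div_le_iff₀ (by positivity), div_mul_eq_mul_div, ← mul_pow]
    refine (Nat.choose_le_pow_div l (c + m * a + l)).trans_eq ?_
    congr 2
    push_cast
    field_simp
    ring

lemma le_of_forall_mul_choose_le {N e a b l k : ℕ}
    (h : ∀ m, N * (m + (l + k)).choose (l + k) ≤
      (e + m * a + l).choose l * (e + m * b + k).choose k) :
    N ≤ a ^ l * b ^ k * (l + k).choose l := by
  have hlim := (tendsto_choose_div_pow e a l).mul (tendsto_choose_div_pow e b k)
  have hlim' := (tendsto_choose_div_pow 0 1 (l + k)).const_mul (N : ℝ)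
  have hle : (N : ℝ) * ((1 : ℕ) ^ (l + k) / (l + k).factorial) ≤
      (a : ℝ) ^ l / l.factorial * (b ^ k / k.factorial) := by
    refine le_of_tendsto_of_tendsto' hlim' hlim fun m => ?_
    rw [← mul_div_assoc, div_mul_div_comm, ← pow_add]
    refine div_le_div_of_nonneg_right ?_ (by positivity)
    rw [zero_add, mul_one]
    exact_mod_cast h m
  have hchoose : ((l + k).choose l : ℝ) * l.factorial * k.factorial = (l + k).factorial := by
    rw [Nat.choose_symm_add]
    exact_mod_cast Nat.add_choose_mul_factorial_mul_factorial l k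
  rw [Nat.cast_one, one_pow, mul_one_div, div_mul_div_comm,
    div_le_div_iff₀ (by positivity) (by positivity), ← hchoose] at hle
  refine Nat.cast_le.1 (le_of_mul_le_mul_right ?_
    (show (0 : ℝ) < l.factorial * k.factorial by positivity))
  push_cast
  linarith

end Growth

section Bezout

variable {σ ι K : Type*} [Fintype σ] [Fintype ι] [DecidableEq σ] [DecidableEq ι] [Field K]
  [Infinite K]

-- A dimension count: the map `c ↦ ∑ i, g i * c i (H)` is injective on polynomials of degree `≤ m`.
lemma exists_card_mul_choose_le {β : Type*} [Fintype β] {a b : ℕ}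
    {H : σ ⊕ ι → MvPolynomial (σ ⊕ ι) K} (hH : ∀ j, H j ∈ restrictBidegree σ ι K a b)
    {z : β → σ ⊕ ι → K} (hinj : Function.Injective z) (hz : ∀ i, IsNondegenerateZero H (z i)) :
    ∃ e, ∀ m, Fintype.card β * (m + Fintype.card (σ ⊕ ι)).choose (Fintype.card (σ ⊕ ι)) ≤
      (e + m * a + Fintype.card σ).choose (Fintype.card σ) *
        (e + m * b + Fintype.card ι).choose (Fintype.card ι) := by
  obtain ⟨g, hg⟩ := exists_forall_eval_eq_zero_iff_ne hinj
  refine ⟨Finset.univ.sup fun i => (g i).totalDegree, fun m => ?_⟩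
  set e := Finset.univ.sup fun i => (g i).totalDegree
  let Φ : (β → restrictTotalDegree (σ ⊕ ι) K m) →ₗ[K] MvPolynomial (σ ⊕ ι) K :=
    ∑ i, LinearMap.mulLeft K (g i) ∘ₗ (aeval H).toLinearMap ∘ₗ Submodule.subtype _ ∘ₗ
      LinearMap.proj i
  have hΦ : ∀ c, Φ c = ∑ i, g i * aeval H (c i : MvPolynomial (σ ⊕ ι) K) := by simp [Φ]
  have hΦinj : Function.Injective Φ := by
    refine (injective_iff_map_eq_zero Φ).2 fun c hc => ?_
    rw [hΦ] at hc
    exact funext fun i => Subtype.ext (congrFun (eq_zero_of_sum_mul_aeval_eq_zero hz hg hc) i)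
  have hrange : LinearMap.range Φ ≤ restrictBidegree σ ι K (e + m * a) (e + m * b) := by
    rintro _ ⟨c, rfl⟩
    rw [hΦ]
    refine Submodule.sum_mem _ fun i hi => mul_mem_restrictBidegree ?_ ?_
    · have : (g i).totalDegree ≤ e := Finset.le_sup (f := fun i => (g i).totalDegree) hi
      exact restrictBidegree_mono this this (mem_restrictBidegree_totalDegree _)
    · exact aeval_mem_restrictBidegree hH ((mem_restrictTotalDegree _ _ _).1 (c i).2)
  have hle := Submodule.finrank_mono hrange
  rwa [LinearMap.finrank_range_of_inj hΦinj, finrank_pi_fintype, Finset.sum_const, Finset.card_univ,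
    finrank_restrictTotalDegree, finrank_restrictBidegree, smul_eq_mul] at hle

theorem card_le_of_isNondegenerateZero {β : Type*} [Fintype β] {a b : ℕ}
    {H : σ ⊕ ι → MvPolynomial (σ ⊕ ι) K} (hH : ∀ j, H j ∈ restrictBidegree σ ι K a b)
    {z : β → σ ⊕ ι → K} (hinj : Function.Injective z) (hz : ∀ i, IsNondegenerateZero H (z i)) :
    Fintype.card β ≤ a ^ Fintype.card σ * b ^ Fintype.card ι *
      (Fintype.card σ + Fintype.card ι).choose (Fintype.card σ) := by
  obtain ⟨e, he⟩ := exists_card_mul_choose_le hH hinj hz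
  exact le_of_forall_mul_choose_le fun m => Fintype.card_sum (α := σ) (β := ι) ▸ he m

theorem encard_isNondegenerateZero_le {a b : ℕ}
    {H : σ ⊕ ι → MvPolynomial (σ ⊕ ι) K} (hH : ∀ j, H j ∈ restrictBidegree σ ι K a b) :
    {z | IsNondegenerateZero H z}.encard ≤ (a ^ Fintype.card σ * b ^ Fintype.card ι *
      (Fintype.card σ + Fintype.card ι).choose (Fintype.card σ) : ℕ) := by
  by_contra! hlt
  obtain ⟨Z, hZ, hcard⟩ := Set.exists_subset_encard_eq (Order.add_one_le_of_lt hlt)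
  have := (Set.finite_of_encard_eq_coe (mod_cast hcard)).fintype
  have hle := card_le_of_isNondegenerateZero hH (z := ((↑) : Z → σ ⊕ ι → K))
    Subtype.val_injective fun z => hZ z.2
  rw [Set.encard_eq_coe_toFinset_card, Set.toFinset_card] at hcard
  exact Nat.not_succ_le_self _ ((mod_cast hcard.symm : _ = Fintype.card Z).trans_le hle)

end Bezout

/-! ### Regular values -/

section Sard

variable {τ : Type*} [Fintype τ]

lemma hasFDerivAt_eval (p : MvPolynomial τ ℝ) (x : τ → ℝ) :
    HasFDerivAt (fun x => eval x p)
      (∑ i, eval x (pderiv i p) • ContinuousLinearMap.proj (R := ℝ) (φ := fun _ => ℝ) i) x := by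
  classical
  induction p using MvPolynomial.induction_on with
  | C r => simpa using hasFDerivAt_const r x
  | add p q hp hq => simpa only [map_add, add_smul, Finset.sum_add_distrib] using hp.fun_add hq
  | mul_X p i hp =>
    have hX : HasFDerivAt (fun x : τ → ℝ => x i) (ContinuousLinearMap.proj (R := ℝ) i) x :=
      (ContinuousLinearMap.proj (R := ℝ) (φ := fun _ : τ => ℝ) i).hasFDerivAt
    simp only [map_mul, eval_X]
    refine (hp.fun_mul hX).congr_fderiv (ContinuousLinearMap.ext fun ξ => ?_)
    simp [Derivation.leibniz, pderiv_X, Pi.single_apply, apply_ite (eval x), add_mul,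
      Finset.sum_add_distrib, Finset.mul_sum, mul_assoc]

variable [DecidableEq τ]

lemma exists_mem_forall_isNondegenerateZero (F : τ → MvPolynomial τ ℝ) {U : Set (τ → ℝ)}
    (hU : IsOpen U) (hne : U.Nonempty) :
    ∃ c ∈ U, ∀ z, (∀ j, eval z (F j) = c j) → IsNondegenerateZero (fun j => F j - C (c j)) z := by
  set f : (τ → ℝ) → τ → ℝ := fun z j => eval z (F j)
  let f' : (τ → ℝ) → (τ → ℝ) →L[ℝ] τ → ℝ := fun z =>
    LinearMap.toContinuousLinearMap (jacobianMatrix F z).toLin'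
  have hf : ∀ z, HasFDerivAt f (f' z) z := fun z => hasFDerivAt_pi'.2 fun j => by
    refine (hasFDerivAt_eval (F j) z).congr_fderiv (ContinuousLinearMap.ext fun ξ => ?_)
    simp [f', jacobianMatrix, Matrix.mulVec, dotProduct]
  have hnull : MeasureTheory.volume (f '' {z | (f' z).det = 0}) = 0 :=
    MeasureTheory.addHaar_image_eq_zero_of_det_fderivWithin_eq_zero _
      (fun z _ => (hf z).hasFDerivWithinAt) fun z hz => hz
  obtain ⟨c, hcU, hc⟩ := Set.not_subset.1 fun hsub : U ⊆ f '' {z | (f' z).det = 0} =>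
    (hU.measure_pos MeasureTheory.volume hne).ne' (MeasureTheory.measure_mono_null hsub hnull)
  refine ⟨c, hcU, fun z hz => ⟨fun j => by simp [hz j], fun hdet => hc ⟨z, ?_, funext hz⟩⟩⟩
  have hjac : jacobianMatrix (fun j => F j - C (c j)) z = jacobianMatrix F z := by
    ext; simp [jacobianMatrix]
  simpa [f', ← hjac] using hdet

end Sard

/-! ### Critical points of weighted products -/

section Gaussian

variable {σ ι : Type*} [Fintype σ] [Fintype ι]

lemma sq_norm_le_sum_sq (x : σ → ℝ) : ‖x‖ ^ 2 ≤ ∑ a, x a ^ 2 := by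
  refine (Real.le_sqrt (norm_nonneg x) (by positivity)).1
    ((pi_norm_le_iff_of_nonneg (Real.sqrt_nonneg _)).2 fun a => Real.abs_le_sqrt ?_)
  exact Finset.single_le_sum (f := fun a => x a ^ 2) (fun a _ => sq_nonneg _) (Finset.mem_univ a)

lemma exists_abs_eval_le_exp (p : MvPolynomial σ ℝ) :
    ∃ B, ∀ x, |eval x p| ≤ Real.exp (B * (1 + ‖x‖)) := by
  induction p using MvPolynomial.induction_on with
  | C r =>
    refine ⟨|r|, fun x => ?_⟩
    rw [eval_C]
    nlinarith [Real.add_one_le_exp (|r| * (1 + ‖x‖)), mul_nonneg (abs_nonneg r) (norm_nonneg x)]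
  | add p q hp hq =>
    obtain ⟨B, hB⟩ := hp
    obtain ⟨B', hB'⟩ := hq
    refine ⟨max B B' + 1, fun x => ?_⟩
    have hexp : ∀ {b}, b ≤ max B B' → Real.exp (b * (1 + ‖x‖)) ≤ Real.exp (max B B' * (1 + ‖x‖)) :=
      fun hb => by gcongr
    have htwo : 2 ≤ Real.exp (1 + ‖x‖) := by
      linarith [Real.add_one_le_exp (1 + ‖x‖), norm_nonneg x]
    calc |eval x (p + q)| ≤ |eval x p| + |eval x q| := by rw [map_add]; exact abs_add_le _ _
      _ ≤ 2 * Real.exp (max B B' * (1 + ‖x‖)) := by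
        linarith [hB x, hB' x, hexp (le_max_left B B'), hexp (le_max_right B B')]
      _ ≤ Real.exp (1 + ‖x‖) * Real.exp (max B B' * (1 + ‖x‖)) := by gcongr
      _ = _ := by rw [← Real.exp_add]; ring_nf
  | mul_X p i hp =>
    obtain ⟨B, hB⟩ := hp
    refine ⟨B + 1, fun x => ?_⟩
    have hx : |x i| ≤ Real.exp (1 + ‖x‖) := by
      linarith [Real.add_one_le_exp (1 + ‖x‖), norm_le_pi_norm x i, Real.norm_eq_abs (x i)]
    calc |eval x (p * X i)| = |eval x p| * |x i| := by rw [map_mul, eval_X, abs_mul]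
      _ ≤ Real.exp (B * (1 + ‖x‖)) * Real.exp (1 + ‖x‖) := by gcongr; exact hB x
      _ = _ := by rw [← Real.exp_add]; ring_nf

/-- The weighted product `∏ i, |P i| ^ w i` times a Gaussian centred at `-v`. Its critical points
off the zero sets of the `P i` solve the equations of `lagrangeSystem P` with right-hand side
`Sum.elim v w`, on putting `λ i = w i / P i(x)`. -/
def gaussianProduct (P : ι → MvPolynomial σ ℝ) (w : ι → ℝ) (v x : σ → ℝ) : ℝ :=
  (∏ i, |eval x (P i)| ^ w i) * Real.exp (-(2⁻¹ * ∑ a, (x a + v a) ^ 2))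

variable (P : ι → MvPolynomial σ ℝ) {w : ι → ℝ} (v : σ → ℝ)

lemma continuous_gaussianProduct (hw : ∀ i, 0 < w i) : Continuous (gaussianProduct P w v) := by
  refine .mul (continuous_finsetProd _ fun i _ => ?_) (by fun_prop)
  exact (continuous_eval (P i)).abs.rpow_const fun _ => .inr (hw i).le

lemma exists_gaussianProduct_le_exp (hw : ∀ i, 0 < w i) :
    ∃ K, ∀ x, gaussianProduct P w v x ≤ Real.exp (K - ‖x‖) := by
  choose B hB using fun i => exists_abs_eval_le_exp (P i)
  set D := ∑ i, |B i| * w i with hD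
  have hD0 : 0 ≤ D := Finset.sum_nonneg fun i _ => mul_nonneg (abs_nonneg _) (hw i).le
  have hprod (x) : ∏ i, |eval x (P i)| ^ w i ≤ Real.exp (D * (1 + ‖x‖)) := by
    rw [hD, Finset.sum_mul, Real.exp_sum]
    refine Finset.prod_le_prod (fun i _ => by positivity) fun i _ => ?_
    calc |eval x (P i)| ^ w i ≤ Real.exp (|B i| * (1 + ‖x‖)) ^ w i := by
          refine Real.rpow_le_rpow (abs_nonneg _) ((hB i x).trans ?_) (hw i).le
          gcongr
          exact le_abs_self _
      _ = _ := by rw [← Real.exp_mul]; ring_nf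
  refine ⟨D * (1 + ‖v‖) + (D + 1) ^ 2 / 2 + ‖v‖, fun x => ?_⟩
  have hnorm : ‖x‖ ≤ ‖x + v‖ + ‖v‖ := by simpa using norm_sub_le (x + v) v
  have hsq : ‖x + v‖ ^ 2 ≤ ∑ a, (x a + v a) ^ 2 := sq_norm_le_sum_sq (x + v)
  calc gaussianProduct P w v x
      ≤ Real.exp (D * (1 + ‖x‖)) * Real.exp (-(2⁻¹ * ∑ a, (x a + v a) ^ 2)) := by
        unfold gaussianProduct; gcongr; exact hprod x
    _ = Real.exp (D * (1 + ‖x‖) - 2⁻¹ * ∑ a, (x a + v a) ^ 2) := by rw [← Real.exp_add]; ring_nf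
    _ ≤ _ := by
      rw [Real.exp_le_exp]
      nlinarith [hsq, mul_le_mul_of_nonneg_left hnorm hD0, sq_nonneg (‖x + v‖ - (D + 1))]

lemma tendsto_gaussianProduct_cocompact (hw : ∀ i, 0 < w i) :
    Tendsto (gaussianProduct P w v) (cocompact _) (𝓝 0) := by
  obtain ⟨K, hK⟩ := exists_gaussianProduct_le_exp P v hw
  have hlim : Tendsto (fun x : σ → ℝ => Real.exp (K - ‖x‖)) (cocompact _) (𝓝 0) :=
    Real.tendsto_exp_atBot.comp
      (tendsto_atBot_add_const_left _ K (tendsto_neg_atTop_atBot.comp tendsto_norm_cocompact_atTop))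
  refine squeeze_zero (fun x => ?_) hK hlim
  unfold gaussianProduct
  positivity

lemma gaussianProduct_pos_iff (hw : ∀ i, 0 < w i) {x : σ → ℝ} :
    0 < gaussianProduct P w v x ↔ ∀ i, eval x (P i) ≠ 0 := by
  refine ⟨fun h i hi => h.ne' ?_, fun h => ?_⟩
  · simp [gaussianProduct, Finset.prod_eq_zero (Finset.mem_univ i), hi, Real.zero_rpow (hw i).ne']
  · exact mul_pos (Finset.prod_pos fun i _ => Real.rpow_pos_of_pos (abs_pos.2 (h i)) _)
      (Real.exp_pos _)

lemma exists_isLocalMax_gaussianProduct (hw : ∀ i, 0 < w i) {x₀ : σ → ℝ}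
    (hx₀ : ∀ i, eval x₀ (P i) ≠ 0) :
    ∃ x, (∀ i, 0 < eval x₀ (P i) * eval x (P i)) ∧ IsLocalMax (gaussianProduct P w v) x := by
  have hcont (i) : Continuous fun x => eval x₀ (P i) * eval x (P i) :=
    (continuous_eval (P i)).const_mul _
  set T := {x | ∀ i, 0 ≤ eval x₀ (P i) * eval x (P i)}
  have hTc : IsClosed T := by
    simpa only [T, Set.ofPred_forall] using
      isClosed_iInter fun i => isClosed_le continuous_const (hcont i)
  have hx₀T : x₀ ∈ T := fun i => mul_self_nonneg _
  have hpos := (gaussianProduct_pos_iff P v hw).2 hx₀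
  have hev : ∀ᶠ x in cocompact _ ⊓ 𝓟 T, gaussianProduct P w v x ≤ gaussianProduct P w v x₀ :=
    ((tendsto_gaussianProduct_cocompact P v hw).eventually (ge_mem_nhds hpos)).filter_mono
      inf_le_left
  obtain ⟨x, hxT, hmax⟩ :=
    (continuous_gaussianProduct P v hw).continuousOn.exists_isMaxOn' hTc hx₀T hev
  have hx := (gaussianProduct_pos_iff P v hw).1 (hpos.trans_le (hmax hx₀T))
  have hxpos (i) : 0 < eval x₀ (P i) * eval x (P i) :=
    (hxT i).lt_of_ne' (mul_ne_zero (hx₀ i) (hx i))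
  refine ⟨x, hxpos, hmax.isLocalMax ?_⟩
  filter_upwards [eventually_all.2 fun i =>
    (hcont i).continuousAt.eventually (lt_mem_nhds (hxpos i))] with y hy i using (hy i).le

lemma log_gaussianProduct {x : σ → ℝ} (hx : ∀ i, eval x (P i) ≠ 0) :
    Real.log (gaussianProduct P w v x) =
      ∑ i, w i * Real.log (eval x (P i)) - 2⁻¹ * ∑ a, (x a + v a) ^ 2 := by
  have hrpow (i) : |eval x (P i)| ^ w i ≠ 0 := (Real.rpow_pos_of_pos (abs_pos.2 (hx i)) _).ne'
  rw [gaussianProduct, Real.log_mul (Finset.prod_ne_zero_iff.2 fun i _ => hrpow i)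
    (Real.exp_ne_zero _), Real.log_exp, Real.log_prod fun i _ => hrpow i, ← sub_eq_add_neg]
  simp only [Real.log_rpow (abs_pos.2 (hx _)), Real.log_abs]

lemma sum_mul_eval_pderiv_eq_of_isLocalMax (hw : ∀ i, 0 < w i) {x : σ → ℝ}
    (hx : ∀ i, eval x (P i) ≠ 0) (hmax : IsLocalMax (gaussianProduct P w v) x) (a : σ) :
    ∑ i, w i / eval x (P i) * eval x (pderiv a (P i)) = x a + v a := by
  classical
  have hne : ∀ᶠ y in 𝓝 x, ∀ i, eval y (P i) ≠ 0 :=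
    eventually_all.2 fun i => (continuous_eval (P i)).continuousAt.eventually_ne (hx i)
  have hlogmax : IsLocalMax
      (fun y => ∑ i, w i * Real.log (eval y (P i)) - 2⁻¹ * ∑ b, (y b + v b) ^ 2) x := by
    filter_upwards [hmax, hne] with y hy hy0
    rw [← log_gaussianProduct P v hy0, ← log_gaussianProduct P v hx]
    exact Real.log_le_log ((gaussianProduct_pos_iff P v hw).2 hy0) hy
  have hderiv := (HasFDerivAt.fun_sum fun i (_ : i ∈ Finset.univ) =>
      ((hasFDerivAt_eval (P i) x).log (hx i)).const_mul (w i)).fun_sub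
    ((HasFDerivAt.fun_sum fun b (_ : b ∈ Finset.univ) =>
      ((hasFDerivAt_apply (𝕜 := ℝ) b x).add_const (v b)).pow 2).const_mul 2⁻¹)
  have hzero :
      ∑ i, w i / eval x (P i) * eval x (pderiv a (P i)) - 2⁻¹ * (2 * x a + 2 * v a) = 0 := by
    simpa [Pi.single_apply, div_eq_mul_inv, mul_assoc] using
      DFunLike.congr_fun (hlogmax.hasFDerivAt_eq_zero hderiv) (Pi.single a 1)
  linarith

end Gaussian

/-! ### Counting sign vectors -/

section LagrangeSystem

variable {σ ι R : Type*} [Fintype ι] [CommRing R]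

/-- The equations `∑ i, λ i * ∂P i/∂x a - x a` and `λ i * P i(x)`, in the variables `x` (left) and
`λ` (right): the partial derivatives of `∑ i, λ i * P i(x) - ∑ a, (x a)²/2`, where those in the
direction of `λ i` are multiplied by `λ i`. -/
def lagrangeSystem (P : ι → MvPolynomial σ R) : σ ⊕ ι → MvPolynomial (σ ⊕ ι) R :=
  Sum.elim (fun a => ∑ i, X (.inr i) * rename .inl (pderiv a (P i)) - X (.inl a))
    fun i => X (.inr i) * rename .inl (P i)

variable (P : ι → MvPolynomial σ R)

lemma eval_lagrangeSystem_inl (z : σ ⊕ ι → R) (a : σ) :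
    eval z (lagrangeSystem P (.inl a)) =
      ∑ i, z (.inr i) * eval (z ∘ .inl) (pderiv a (P i)) - z (.inl a) := by
  simp [lagrangeSystem, eval_rename]

lemma eval_lagrangeSystem_inr (z : σ ⊕ ι → R) (i : ι) :
    eval z (lagrangeSystem P (.inr i)) = z (.inr i) * eval (z ∘ .inl) (P i) := by
  simp [lagrangeSystem, eval_rename]

lemma lagrangeSystem_mem_restrictBidegree {P : ι → MvPolynomial σ R} {d : ℕ}
    (hd : 1 ≤ d) (hP : ∀ i, (P i).totalDegree ≤ d) (j : σ ⊕ ι) :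
    lagrangeSystem P j ∈ restrictBidegree σ ι R d 1 := by
  have hmul {q : MvPolynomial σ R} (hq : q.totalDegree ≤ d) (i : ι) :
      X (.inr i) * rename .inl q ∈ restrictBidegree σ ι R d 1 := by
    simpa using mul_mem_restrictBidegree (X_inr_mem_restrictBidegree i)
      (rename_inl_mem_restrictBidegree hq)
  cases j with
  | inl a =>
    refine sub_mem (sum_mem fun i _ => hmul ?_ i)
      (restrictBidegree_mono hd zero_le_one (X_inl_mem_restrictBidegree a))
    exact (totalDegree_pderiv_le _ _).trans ((Nat.sub_le _ _).trans (hP i))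
  | inr i => exact hmul (hP i) i

end LagrangeSystem

section SignVectors

variable {σ ι : Type*}

/-- The sign vectors of the family `p` realized at points of `ℝ^σ`. -/
def signVectors (p : ι → MvPolynomial σ ℝ) : Set (ι → SignType) :=
  {v | ∃ x : σ → ℝ, ∀ i, v i = SignType.sign (eval x (p i))}

lemma sign_eq_sign_of_mul_pos {x y : ℝ} (h : 0 < x * y) : SignType.sign x = SignType.sign y := by
  rcases pos_and_pos_or_neg_and_neg_of_mul_pos h with ⟨hx, hy⟩ | ⟨hx, hy⟩
  · rw [sign_pos hx, sign_pos hy]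
  · rw [sign_neg hx, sign_neg hy]

/-- The family `p i + ε`, `p i - ε`, whose strict sign vectors encode the sign vectors of `p` when
`ε` is small. -/
def perturbation (p : ι → MvPolynomial σ ℝ) (ε : ℝ) : ι ⊕ ι → MvPolynomial σ ℝ :=
  Sum.elim (fun i => p i + C ε) fun i => p i - C ε

/-- The strict sign vector of `perturbation p ε` at a point where `p` has sign vector `v`. -/
def perturbedSigns (v : ι → SignType) : ι ⊕ ι → SignType :=
  Sum.elim (fun i => if v i = -1 then -1 else 1) fun i => if v i = 1 then 1 else -1

lemma totalDegree_perturbation_le {p : ι → MvPolynomial σ ℝ} {d : ℕ}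
    (hp : ∀ i, (p i).totalDegree ≤ d) (ε : ℝ) (j : ι ⊕ ι) :
    (perturbation p ε j).totalDegree ≤ d := by
  rcases j with i | i
  · exact (totalDegree_add _ _).trans (by simpa using hp i)
  · exact (totalDegree_sub_C_le _ _).trans (hp i)

lemma perturbedSigns_injective : Function.Injective (perturbedSigns (ι := ι)) := by
  intro v w h
  funext i
  have hl := congrFun h (.inl i)
  have hr := congrFun h (.inr i)
  simp only [perturbedSigns, Sum.elim_inl, Sum.elim_inr] at hl hr
  generalize v i = s at *
  generalize w i = t at *
  revert s t
  decide

lemma perturbedSigns_ne_zero (v : ι → SignType) (j : ι ⊕ ι) : perturbedSigns v j ≠ 0 := by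
  rcases j with i | i <;> simp only [perturbedSigns, Sum.elim_inl, Sum.elim_inr] <;> split_ifs <;>
    decide

lemma eventually_sign_add_eq (r : ℝ) : ∀ᶠ ε in 𝓝[>] 0,
    (if SignType.sign r = -1 then -1 else 1) = SignType.sign (r + ε) ∧
      (if SignType.sign r = 1 then 1 else -1) = SignType.sign (r - ε) := by
  have hpos : ∀ᶠ ε : ℝ in 𝓝[>] 0, 0 < ε := self_mem_nhdsWithin
  rcases lt_trichotomy r 0 with hr | rfl | hr
  · filter_upwards [hpos, nhdsWithin_le_nhds (gt_mem_nhds (neg_pos.2 hr))] with ε hε hεr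
    rw [sign_neg hr, sign_neg (by linarith), sign_neg (by linarith)]
    decide
  · filter_upwards [hpos] with ε hε
    simp [hε]
  · filter_upwards [hpos, nhdsWithin_le_nhds (gt_mem_nhds hr)] with ε hε hεr
    rw [sign_pos hr, sign_pos (by linarith), sign_pos (by linarith)]
    decide

lemma eventually_perturbedSigns_mem_signVectors [Finite ι] {p : ι → MvPolynomial σ ℝ}
    {v : ι → SignType} (hv : v ∈ signVectors p) :
    ∀ᶠ ε in 𝓝[>] 0, perturbedSigns v ∈ signVectors (perturbation p ε) := by
  obtain ⟨x, hx⟩ := hv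
  filter_upwards [eventually_all.2 fun i => eventually_sign_add_eq (eval x (p i))] with ε hε
  refine ⟨x, ?_⟩
  rintro (i | i)
  · simpa [perturbedSigns, perturbation, hx] using (hε i).1
  · simpa [perturbedSigns, perturbation, hx] using (hε i).2

lemma exists_eval_lagrangeSystem_eq [Finite σ] [Fintype ι] (P : ι → MvPolynomial σ ℝ)
    {c : σ ⊕ ι → ℝ} (hc : ∀ i, 0 < c (.inr i)) {x₀ : σ → ℝ} (hx₀ : ∀ i, eval x₀ (P i) ≠ 0) :
    ∃ z, (∀ j, eval z (lagrangeSystem P j) = c j) ∧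
      ∀ i, SignType.sign (eval x₀ (P i)) = SignType.sign (eval (z ∘ Sum.inl) (P i)) := by
  cases nonempty_fintype σ
  obtain ⟨x, hpos, hmax⟩ := exists_isLocalMax_gaussianProduct P (c ∘ .inl) hc hx₀
  have hx (i) : eval x (P i) ≠ 0 := right_ne_zero_of_mul (hpos i).ne'
  refine ⟨Sum.elim x fun i => c (.inr i) / eval x (P i), ?_,
    fun i => sign_eq_sign_of_mul_pos (hpos i)⟩
  rintro (a | i)
  · have hcrit := sum_mul_eval_pderiv_eq_of_isLocalMax P (c ∘ .inl) hc hx hmax a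
    simpa [eval_lagrangeSystem_inl, sub_eq_iff_eq_add'] using hcrit
  · simp [eval_lagrangeSystem_inr, hx i]

variable [Fintype σ] [Fintype ι]

lemma ncard_signVectors_ne_zero_le {d : ℕ} (hd : 1 ≤ d) {P : ι → MvPolynomial σ ℝ}
    (hP : ∀ i, (P i).totalDegree ≤ d) :
    {v ∈ signVectors P | ∀ i, v i ≠ 0}.ncard ≤
      d ^ Fintype.card σ * (Fintype.card σ + Fintype.card ι).choose (Fintype.card σ) := by
  classical
  have hU : IsOpen {c : σ ⊕ ι → ℝ | ∀ i, 0 < c (.inr i)} := by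
    simpa only [Set.ofPred_forall] using
      isOpen_iInter_of_finite fun i => isOpen_lt continuous_const (continuous_apply (Sum.inr i))
  obtain ⟨c, hc, hcreg⟩ := exists_mem_forall_isNondegenerateZero (lagrangeSystem P) hU
    ⟨1, fun _ => zero_lt_one⟩
  set Z := {z | IsNondegenerateZero (fun j => lagrangeSystem P j - C (c j)) z}
  have hZ : Z.encard ≤ _ := encard_isNondegenerateZero_le fun j =>
    sub_mem (lagrangeSystem_mem_restrictBidegree hd hP j) (C_mem_restrictBidegree (c j))
  have hsub : {v ∈ signVectors P | ∀ i, v i ≠ 0} ⊆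
      (fun (z : σ ⊕ ι → ℝ) i => SignType.sign (eval (z ∘ Sum.inl) (P i))) '' Z := by
    rintro v ⟨⟨x₀, hv⟩, hv0⟩
    obtain ⟨z, hz, hsign⟩ := exists_eval_lagrangeSystem_eq P hc
      (x₀ := x₀) fun i => sign_ne_zero.1 (hv i ▸ hv0 i)
    exact ⟨z, hcreg z hz, funext fun i => (hsign i).symm.trans (hv i).symm⟩
  have hle := (Set.encard_le_encard hsub).trans ((Set.encard_image_le _ _).trans hZ)
  rwa [← (Set.toFinite _).cast_ncard_eq, Nat.cast_le, one_pow, mul_one] at hle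

theorem warren_sign_vectors_general {d : ℕ} (hd : 1 ≤ d) {p : ι → MvPolynomial σ ℝ}
    (hp : ∀ i, (p i).totalDegree ≤ d) :
    (signVectors p).ncard ≤
      d ^ Fintype.card σ * (Fintype.card σ + 2 * Fintype.card ι).choose (Fintype.card σ) := by
  have hev : ∀ᶠ ε in 𝓝[>] 0, ∀ v : signVectors p,
      perturbedSigns v ∈ signVectors (perturbation p ε) :=
    eventually_all.2 fun v => eventually_perturbedSigns_mem_signVectors v.2
  obtain ⟨ε, hε⟩ := hev.exists
  have hstrict := ncard_signVectors_ne_zero_le hd (totalDegree_perturbation_le hp ε)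
  rw [Fintype.card_sum, ← two_mul] at hstrict
  refine le_trans ?_ hstrict
  exact Set.ncard_le_ncard_of_injOn perturbedSigns
    (fun v hv => ⟨hε ⟨v, hv⟩, perturbedSigns_ne_zero v⟩) perturbedSigns_injective.injOn

end SignVectors

section Numerics

lemma choose_le_exp_mul_div_pow (n l : ℕ) : (n.choose l : ℝ) ≤ (Real.exp 1 * n / l) ^ l := by
  have hexp : (l : ℝ) ^ l / l.factorial ≤ Real.exp 1 ^ l := by
    simpa [← Real.exp_nat_mul] using Real.pow_div_factorial_le_exp (l : ℝ) l.cast_nonneg l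
  rcases l.eq_zero_or_pos with rfl | hl
  · simp
  calc (n.choose l : ℝ) ≤ n ^ l / l.factorial := Nat.choose_le_pow_div l n
    _ = (n / l) ^ l * (l ^ l / l.factorial) := by rw [div_pow]; field_simp
    _ ≤ (n / l) ^ l * Real.exp 1 ^ l := by gcongr
    _ = _ := by rw [← mul_pow]; ring_nf

lemma pow_mul_choose_le {l k : ℕ} (hk : l ≤ k) (d : ℕ) :
    ((d ^ l * (l + 2 * k).choose l : ℕ) : ℝ) ≤ (8 * Real.exp 1 * d * k / l) ^ l := by
  have hn : ((l + 2 * k : ℕ) : ℝ) ≤ 8 * k := by norm_cast; omega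
  calc ((d ^ l * (l + 2 * k).choose l : ℕ) : ℝ)
      ≤ d ^ l * (Real.exp 1 * (l + 2 * k : ℕ) / l) ^ l := by
        push_cast
        gcongr
        exact_mod_cast choose_le_exp_mul_div_pow (l + 2 * k) l
    _ ≤ d ^ l * (Real.exp 1 * (8 * k) / l) ^ l := by gcongr
    _ = _ := by rw [← mul_pow]; ring_nf

end Numerics

end

/-- **Warren's theorem (1968).** Given `k` real polynomials in `l` variables, each of total
degree at most `d`, with `d ≥ 1` and `k ≥ l ≥ 1`, the number of distinct sign vectors
`(sgn(p₁(x)), …, sgn(p_k(x))) ∈ {−1,0,1}^k` realized as `x` ranges over `ℝ^l` is at most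
`(8·e·d·k/l)^l`. -/
theorem warren_sign_vectors (l k d : ℕ) (hl : 1 ≤ l) (hk : l ≤ k) (hd : 1 ≤ d)
    (p : Fin k → MvPolynomial (Fin l) ℝ) (hdeg : ∀ i, (p i).totalDegree ≤ d) :
    ((({v : Fin k → SignType |
        ∃ x : Fin l → ℝ, ∀ i, v i = SignType.sign (MvPolynomial.eval x (p i))}).ncard : ℝ)) ≤
      (8 * Real.exp 1 * d * k / l) ^ l := by
  have hcount : (signVectors p).ncard ≤ d ^ l * (l + 2 * k).choose l := by
    simpa only [Fintype.card_fin] using warren_sign_vectors_general hd hdeg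
  exact (Nat.cast_le.2 hcount).trans (pow_mul_choose_le hk d)
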